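/- arXiv:1307.4201 — 2 statements merged into one kernel-verified Lean document; each statement's English description precedes it below -/
import Mathlib

section
/- Let G be a partially ordered additive commutative group, let u ∈ G with 0 ≤ u, and let E = {x ∈ G : 0 ≤ x ≤ u}. Let τ : E → E satisfy τ(u) = u, τ(a+b) = τ(a)+τ(b) whenever a, b and a+b all lie in E, and τ(τ(a)) = τ(a) for all a ∈ E. Assume τ is faithful, i.e., for a ∈ E, τ(a) = 0 implies a = 0. Then τ is strong: for all a, b ∈ E, if c ∈ E is the greatest lower bound of {τ(a), τ(b)} within the partially ordered set E, then τ(c) = c. -/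
/-! An additive map of `[0,u]` into itself is monotone, so `τ c` is again a lower bound of the fixed
elements that `c` lies below, whence `τ c ≤ c`. Idempotence then makes `τ` vanish on `c - τ c`, and
faithfulness kills this difference. -/

open Set

/-- A map on the interval effect algebra `[0,u]` that preserves its partial addition, where
`a ⊕ b = a + b` is defined only if `a + b ≤ u`. Values of `f` outside `[0,u]` are unconstrained, and
the codomain may be any group, so that additivity is separated from positivity. -/
def IsIntervalAdditive {G H : Type*} [AddCommGroup G] [PartialOrder G] [AddCommGroup H]
    (u : G) (f : G → H) : Prop :=
  ∀ a ∈ Icc 0 u, ∀ b ∈ Icc 0 u, a + b ∈ Icc 0 u → f (a + b) = f a + f b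

theorem sub_mem_Icc_zero {G : Type*} [AddCommGroup G] [PartialOrder G] [AddLeftMono G]
    {u x y : G} (hx : 0 ≤ x) (hxy : x ≤ y) (hy : y ≤ u) : y - x ∈ Icc 0 u :=
  ⟨sub_nonneg.mpr hxy, (sub_le_self y hx).trans hy⟩

namespace IsIntervalAdditive

variable {G H : Type*} [AddCommGroup G] [PartialOrder G] [AddLeftMono G] [AddCommGroup H]
  {u x y : G} {f : G → H}

theorem map_sub (hf : IsIntervalAdditive u f) (hx : 0 ≤ x) (hxy : x ≤ y) (hy : y ≤ u) :
    f (y - x) = f y - f x := by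
  have hsum : f (x + (y - x)) = f x + f (y - x) :=
    hf x ⟨hx, hxy.trans hy⟩ (y - x) (sub_mem_Icc_zero hx hxy hy)
      (by simpa only [add_sub_cancel] using ⟨hx.trans hxy, hy⟩)
  rw [add_sub_cancel] at hsum
  exact eq_sub_of_add_eq' hsum.symm

theorem monotoneOn [PartialOrder H] [AddLeftMono H] (hf : IsIntervalAdditive u f)
    (hnonneg : ∀ a ∈ Icc 0 u, 0 ≤ f a) : MonotoneOn f (Icc 0 u) := by
  intro x hx y hy hxy
  rw [← sub_nonneg, ← hf.map_sub hx.1 hxy hy.2]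
  exact hnonneg _ (sub_mem_Icc_zero hx.1 hxy hy.2)

theorem eq_of_le_of_map_eq (hf : IsIntervalAdditive u f)
    (hfaithful : ∀ a ∈ Icc 0 u, f a = 0 → a = 0) (hx : 0 ≤ x) (hxy : x ≤ y) (hy : y ≤ u)
    (hmap : f x = f y) : x = y := by
  have hker : f (y - x) = 0 := by rw [hf.map_sub hx hxy hy, hmap, sub_self]
  exact (sub_eq_zero.mp (hfaithful _ (sub_mem_Icc_zero hx hxy hy) hker)).symm

end IsIntervalAdditive

theorem faithful_stateOperator_is_strong_general {G : Type*} [AddCommGroup G] [PartialOrder G]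
    [AddLeftMono G] {u : G} {τ : G → G} (hmaps : MapsTo τ (Icc 0 u) (Icc 0 u))
    (hadd : IsIntervalAdditive u τ) (hidem : ∀ a ∈ Icc 0 u, τ (τ a) = τ a)
    (hfaithful : ∀ a ∈ Icc 0 u, τ a = 0 → a = 0) {S : Set G} (hS : S ⊆ Icc 0 u) {c : G}
    (hc : IsGreatest (Icc 0 u ∩ lowerBounds (τ '' S)) c) : τ c = c := by
  obtain ⟨⟨hcE, hcS⟩, hgreatest⟩ := hc
  have hmono : MonotoneOn τ (Icc 0 u) := hadd.monotoneOn fun a ha => (hmaps ha).1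
  have hlower : τ c ∈ lowerBounds (τ '' S) := by
    rintro _ ⟨a, ha, rfl⟩
    calc
      τ c ≤ τ (τ a) := hmono hcE (hmaps (hS ha)) (hcS (mem_image_of_mem τ ha))
      _ = τ a := hidem a (hS ha)
  have hle : τ c ≤ c := hgreatest ⟨hmaps hcE, hlower⟩
  exact hadd.eq_of_le_of_map_eq hfaithful (hmaps hcE).1 hle hcE.2 (hidem c hcE)

/-- A faithful state operator on the interval effect algebra `E = [0,u]` of a
partially ordered abelian group is strong: if `c ∈ E` is the greatest lower bound of
`{τ a, τ b}` within the poset `E`, then `τ c = c`. -/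
theorem faithful_stateOperator_is_strong
    (G : Type*) [AddCommGroup G] [PartialOrder G]
    [CovariantClass G G (· + ·) (· ≤ ·)]
    (u : G) (hu : 0 ≤ u)
    (τ : G → G)
    (hmaps : ∀ a ∈ Set.Icc (0 : G) u, τ a ∈ Set.Icc (0 : G) u)
    (hunit : τ u = u)
    (hadd : ∀ a ∈ Set.Icc (0 : G) u, ∀ b ∈ Set.Icc (0 : G) u,
      a + b ∈ Set.Icc (0 : G) u → τ (a + b) = τ a + τ b)
    (hidem : ∀ a ∈ Set.Icc (0 : G) u, τ (τ a) = τ a)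
    (hfaithful : ∀ a ∈ Set.Icc (0 : G) u, τ a = 0 → a = 0) :
    ∀ a ∈ Set.Icc (0 : G) u, ∀ b ∈ Set.Icc (0 : G) u, ∀ c ∈ Set.Icc (0 : G) u,
      (c ≤ τ a ∧ c ≤ τ b ∧
        ∀ d ∈ Set.Icc (0 : G) u, d ≤ τ a → d ≤ τ b → d ≤ c) →
      τ c = c := by
  intro a ha b hb c hc ⟨hca, hcb, hglb⟩
  have hgreatest : IsGreatest (Icc 0 u ∩ lowerBounds (τ '' {a, b})) c := by
    rw [image_pair, lowerBounds_insert, lowerBounds_singleton]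
    exact ⟨⟨hc, hca, hcb⟩, fun d ⟨hd, hda, hdb⟩ => hglb d hd hda hdb⟩
  exact faithful_stateOperator_is_strong_general hmaps hadd hidem hfaithful
    (pair_subset ha hb) hgreatest
end

section
/- Let A be a unital C*-algebra, E(A) = {a ∈ A : 0 ≤ a ≤ 1}, and let τ : E(A) → E(A) be a state operator (unital, additive and idempotent) that is faithful: for a ∈ E(A), τ(a) = 0 implies a = 0. Then τ satisfies the conditional expectation property: τ(τ(a)·b·τ(a)) = τ(a)·τ(b)·τ(a) for all a, b ∈ E(A). -/
/-! The operator `τ` extends to a positive unital additive map `T` on the whole algebra. Such a map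
satisfies Kadison's inequality `T x * T x ≤ T (x * x)` for self-adjoint `x`: for `0 ≤ x ≤ 1`, the
Bernstein polynomials of degree `n` at `x` behave like the weights of a binomial distribution with
mean `n x` and variance `n x (1 - x)`, and their images under `T` are again positive weights with
sum one, of mean `n T x` and of nonnegative variance; dividing by `n ^ 2` and letting `n → ∞` gives
the inequality. If `T a = a`, then `T (a * a) - a * a` is therefore positive; `T` annihilates it,
so faithfulness gives `T (a * a) = a * a`. The difference of the two sides of Kadison's inequality
at `n a + c` is then affine in `n`, and its leading coefficient, taken for `c` and for `-c`, yields
`T (a * c + c * a) = a * T c + T c * a`. The map `b ↦ a * b * a` is built out of Jordan products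
with `a` and `a * a`, so it commutes with `T`.
-/

open Set Finset Polynomial

section OrderedModule

variable {E F : Type*} [AddCommGroup E]

lemma nsmul_inv_natCast_smul [Module ℝ E] {n : ℕ} (hn : n ≠ 0) (x : E) :
    n • ((n : ℝ)⁻¹ • x) = x := by
  rw [← Nat.cast_smul_eq_nsmul ℝ, smul_inv_smul₀ (Nat.cast_ne_zero.2 hn)]

variable [PartialOrder E]

lemma nonneg_of_nsmul_nonneg [Module ℝ E] [PosSMulMono ℝ E] {n : ℕ} (hn : n ≠ 0) {x : E}
    (h : 0 ≤ n • x) : 0 ≤ x := by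
  rw [← nsmul_inv_natCast_smul hn x, smul_comm]
  exact smul_nonneg (by positivity) h

lemma inv_natCast_smul_mem_Icc [Module ℝ E] [PosSMulMono ℝ E] {n : ℕ} (hn : n ≠ 0) {u x : E}
    (hx : 0 ≤ x) (hxu : x ≤ n • u) : (n : ℝ)⁻¹ • x ∈ Icc 0 u := by
  refine ⟨smul_nonneg (by positivity) hx, ?_⟩
  calc (n : ℝ)⁻¹ • x ≤ (n : ℝ)⁻¹ • n • u := smul_le_smul_of_nonneg_left hxu (by positivity)
    _ = u := by rw [smul_comm, nsmul_inv_natCast_smul hn]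

lemma nonneg_of_forall_nsmul_add_nonneg_of_closedIciTopology [Module ℝ E] [PosSMulMono ℝ E]
    [TopologicalSpace E] [ContinuousAdd E] [ContinuousSMul ℝ E] [ClosedIciTopology E] {z w : E}
    (h : ∀ n : ℕ, 0 ≤ n • z + w) : 0 ≤ z := by
  have hlim : Filter.Tendsto (fun n : ℕ => z + (1 / ((n : ℝ) + 1)) • w) .atTop (nhds z) := by
    simpa using tendsto_const_nhds.add
      ((tendsto_one_div_add_atTop_nhds_zero_nat (𝕜 := ℝ)).smul_const w)
  refine ge_of_tendsto' hlim fun n => nonneg_of_nsmul_nonneg n.succ_ne_zero ?_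
  have hw : (n + 1) • ((1 / ((n : ℝ) + 1)) • w) = w := by
    simpa using nsmul_inv_natCast_smul n.succ_ne_zero w
  rw [nsmul_add, hw]
  exact h (n + 1)

/-- The order interval `[0, u]` carries a partial addition, defined when the sum stays in the
interval; `AdditiveOnIcc u τ` says that `τ` preserves it. This is the additivity of a state
operator on an effect algebra. The values of `τ` outside `[0, u]` are irrelevant. -/
def AdditiveOnIcc [Add F] (u : E) (τ : E → F) : Prop :=
  ∀ a ∈ Icc 0 u, ∀ b ∈ Icc 0 u, a + b ∈ Icc 0 u → τ (a + b) = τ a + τ b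

variable [IsOrderedAddMonoid E] [AddCommGroup F]

lemma AdditiveOnIcc.map_nsmul {u : E} {τ : E → F} (hτ : AdditiveOnIcc u τ) {y : E} (hy : 0 ≤ y)
    (k : ℕ) (hk : k • y ≤ u) : τ (k • y) = k • τ y := by
  induction k with
  | zero =>
    have h0 : (0 : E) ∈ Icc 0 u := ⟨le_rfl, by simpa only [zero_nsmul] using hk⟩
    simpa using hτ 0 h0 0 h0 (by simpa using h0)
  | succ k ih =>
    rw [succ_nsmul] at hk ⊢
    have hky : 0 ≤ k • y := nsmul_nonneg hy k
    have hkyu : k • y ≤ u := (le_add_of_nonneg_right hy).trans hk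
    have hyu : y ≤ u := (le_add_of_nonneg_left hky).trans hk
    rw [hτ _ ⟨hky, hkyu⟩ _ ⟨hy, hyu⟩ ⟨add_nonneg hky hy, hk⟩, ih hkyu, succ_nsmul]

lemma AdditiveOnIcc.nsmul_map_inv_natCast_smul_eq [Module ℝ E] [PosSMulMono ℝ E] {u : E}
    {τ : E → F} (hτ : AdditiveOnIcc u τ) {m n : ℕ} (hm : m ≠ 0) (hn : n ≠ 0) {p : E} (hp : 0 ≤ p)
    (hpm : p ≤ m • u) (hpn : p ≤ n • u) :
    m • τ ((m : ℝ)⁻¹ • p) = n • τ ((n : ℝ)⁻¹ • p) := by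
  have refine_denominator : ∀ {m n : ℕ}, m ≠ 0 → n ≠ 0 → p ≤ m • u →
      m • τ ((m : ℝ)⁻¹ • p) = (n * m) • τ (((n * m : ℕ) : ℝ)⁻¹ • p) := by
    intro m n hm hn hpm
    have hsplit : (m : ℝ)⁻¹ • p = n • (((n * m : ℕ) : ℝ)⁻¹ • p) := by
      rw [Nat.cast_mul, mul_inv, mul_smul, nsmul_inv_natCast_smul hn]
    rw [hsplit, hτ.map_nsmul (smul_nonneg (by positivity) hp) n
      (hsplit ▸ (inv_natCast_smul_mem_Icc hm hp hpm).2), smul_smul, mul_comm]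
  rw [refine_denominator hm hn hpm, refine_denominator hn hm hpn, mul_comm]

lemma AdditiveOnIcc.exists_additive_on_nonneg [Module ℝ E] [PosSMulMono ℝ E] {u : E}
    (hu : ∀ p : E, 0 ≤ p → ∃ n : ℕ, n ≠ 0 ∧ p ≤ n • u) {τ : E → F} (hτ : AdditiveOnIcc u τ) :
    ∃ S : E → F, EqOn S τ (Icc 0 u) ∧ ∀ a b, 0 ≤ a → 0 ≤ b → S (a + b) = S a + S b := by
  choose! N hN hle using hu
  let S : E → F := fun p => N p • τ ((N p : ℝ)⁻¹ • p)
  have hS : ∀ {n : ℕ} {p : E}, n ≠ 0 → 0 ≤ p → p ≤ n • u → S p = n • τ ((n : ℝ)⁻¹ • p) :=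
    fun {_ p} hn hp hpn => hτ.nsmul_map_inv_natCast_smul_eq (hN p hp) hn hp (hle p hp) hpn
  refine ⟨S, fun a ha => ?_, fun a b ha hb => ?_⟩
  · simpa using hS one_ne_zero ha.1 (by simpa using ha.2)
  · have hab : 0 ≤ a + b := add_nonneg ha hb
    have hn : N (a + b) ≠ 0 := hN _ hab
    have hab_le : a + b ≤ N (a + b) • u := hle _ hab
    have ha_le := (le_add_of_nonneg_right hb).trans hab_le
    have hb_le := (le_add_of_nonneg_left ha).trans hab_le
    have hsum := inv_natCast_smul_mem_Icc hn hab hab_le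
    rw [smul_add] at hsum
    rw [hS hn ha ha_le, hS hn hb hb_le, hS hn hab hab_le, smul_add,
      hτ _ (inv_natCast_smul_mem_Icc hn ha ha_le) _ (inv_natCast_smul_mem_Icc hn hb hb_le) hsum,
      nsmul_add]

lemma exists_addMonoidHom_eq_on_nonneg [IsDirectedOrder E] {S : E → F}
    (hS : ∀ a b, 0 ≤ a → 0 ≤ b → S (a + b) = S a + S b) :
    ∃ R : E →+ F, ∀ a, 0 ≤ a → R a = S a := by
  have hshift : ∀ x : E, ∃ p, 0 ≤ p ∧ 0 ≤ x + p := fun x => by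
    obtain ⟨p, hp, hxp⟩ := exists_ge_ge 0 (-x)
    exact ⟨p, hp, neg_le_iff_add_nonneg'.1 hxp⟩
  choose p hp hxp using hshift
  have hadd : ∀ x y, S (x + y + p (x + y)) - S (p (x + y))
      = S (x + p x) - S (p x) + (S (y + p y) - S (p y)) := by
    intro x y
    rw [sub_add_sub_comm, sub_eq_sub_iff_add_eq_add, ← hS _ _ (hp x) (hp y),
      ← hS _ _ (hxp x) (hxp y), ← hS _ _ (hxp _) (add_nonneg (hp x) (hp y)),
      ← hS _ _ (add_nonneg (hxp x) (hxp y)) (hp _)]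
    congr 1
    abel
  refine ⟨AddMonoidHom.mk' (fun x => S (x + p x) - S (p x)) hadd, fun a ha => ?_⟩
  rw [AddMonoidHom.mk'_apply, hS _ _ ha (hp a), add_sub_cancel_right]

end OrderedModule

section RingIdentities

variable {A : Type*} [Ring A]

lemma two_nsmul_mul_mul_self (a b : A) : 2 • (a * b * a)
    = a * (a * b + b * a) + (a * b + b * a) * a - (a * a * b + b * (a * a)) := by
  noncomm_ring

lemma sum_sub_mul_mul_sub {s : Finset ℕ} {q : ℕ → A}
    (hq : ∑ k ∈ s, q k = 1) {y : A} (hy : ∑ k ∈ s, k • q k = y) :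
    ∑ k ∈ s, ((k : A) - y) * q k * ((k : A) - y) = ∑ k ∈ s, (k * k) • q k - y * y := by
  have hterm : ∀ k : ℕ, ((k : A) - y) * q k * ((k : A) - y)
      = (k * k) • q k - (k • q k) * y - y * (k • q k) + y * q k * y := by
    intro k
    simp only [nsmul_eq_mul, Nat.cast_mul, sub_mul, mul_sub, mul_assoc, Nat.cast_comm]
    abel
  simp only [hterm, sum_add_distrib, sum_sub_distrib, ← sum_mul, ← mul_sum, hy, hq, mul_one]
  abel

lemma sum_mul_self_nsmul_bernsteinPolynomial (R : Type*) [CommRing R] (n : ℕ) :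
    ∑ k ∈ range (n + 1), (k * k) • bernsteinPolynomial R n k
      = (n * n) • (X * X) + n • (X * (1 - X)) := by
  have hvar := sum_sub_mul_mul_sub (bernsteinPolynomial.sum R n) (bernsteinPolynomial.sum_smul R n)
  calc ∑ k ∈ range (n + 1), (k * k) • bernsteinPolynomial R n k
      = n • X * (n • X) + ∑ k ∈ range (n + 1), ((k : R[X]) - n • X) * bernsteinPolynomial R n k
          * ((k : R[X]) - n • X) := by rw [hvar, add_sub_cancel]
    _ = n • X * (n • X) + ∑ k ∈ range (n + 1), (n • X - (k : R[X])) ^ 2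
          * bernsteinPolynomial R n k :=
      congrArg (_ + ·) (sum_congr rfl fun k _ => by ring)
    _ = (n * n) • (X * X) + n • (X * (1 - X)) := by
      rw [bernsteinPolynomial.variance, smul_mul_smul_comm, smul_mul_assoc]

end RingIdentities

section StarOrderedRing

variable {A : Type*} [Ring A] [StarRing A] [PartialOrder A] [StarOrderedRing A]

lemma mul_one_sub_self_nonneg {x : A} (hx : x ∈ Icc (0 : A) 1) : 0 ≤ x * (1 - x) := by
  have hx' : 0 ≤ 1 - x := sub_nonneg.2 hx.2
  have hsplit : x * (1 - x) = (1 - x) * x * (1 - x) + x * (1 - x) * x := by noncomm_ring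
  rw [hsplit]
  exact add_nonneg (conjugate_nonneg_of_nonneg hx.1 hx') (conjugate_nonneg_of_nonneg hx' hx.1)

lemma mul_mul_self_mem_Icc {a b : A} (ha : a ∈ Icc (0 : A) 1) (hb : b ∈ Icc (0 : A) 1) :
    a * b * a ∈ Icc (0 : A) 1 := by
  refine ⟨conjugate_nonneg_of_nonneg hb.1 ha.1, ?_⟩
  calc a * b * a ≤ a * 1 * a := conjugate_le_conjugate_of_nonneg hb.2 ha.1
    _ ≤ a := by simpa [mul_sub] using mul_one_sub_self_nonneg ha
    _ ≤ 1 := ha.2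

lemma pow_mul_one_sub_pow_nonneg {x : A} (hx : x ∈ Icc (0 : A) 1) (k l : ℕ) :
    0 ≤ x ^ k * (1 - x) ^ l := by
  have hx' : 0 ≤ 1 - x := sub_nonneg.2 hx.2
  have hcomm : Commute x (1 - x) := (Commute.one_right x).sub_right (.refl x)
  have hsa : IsSelfAdjoint (x ^ (k / 2) * (1 - x) ^ (l / 2)) :=
    (((IsSelfAdjoint.of_nonneg hx.1).pow _).commute_iff ((IsSelfAdjoint.of_nonneg hx').pow _)).1
      (hcomm.pow_pow _ _)
  have hparity : 0 ≤ x ^ (k % 2) * (1 - x) ^ (l % 2) := by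
    rcases Nat.mod_two_eq_zero_or_one k with hk | hk <;>
      rcases Nat.mod_two_eq_zero_or_one l with hl | hl <;>
      simp only [hk, hl, pow_zero, pow_one, one_mul, mul_one, zero_le_one, hx.1, hx',
        mul_one_sub_self_nonneg hx]
  -- The rearrangement takes place in `ℤ[X]`, where `x` and `1 - x` can be commuted by `ring`.
  have hpoly : (X ^ k * (1 - X) ^ l : ℤ[X]) = X ^ (k / 2) * (1 - X) ^ (l / 2)
      * (X ^ (k % 2) * (1 - X) ^ (l % 2)) * (X ^ (k / 2) * (1 - X) ^ (l / 2)) := by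
    conv_lhs => rw [← Nat.div_add_mod k 2, ← Nat.div_add_mod l 2]
    ring
  have hconj := congrArg (aeval x) hpoly
  simp only [map_mul, map_pow, map_sub, map_one, aeval_X] at hconj
  rw [hconj]
  exact hsa.conjugate_nonneg hparity

lemma aeval_bernsteinPolynomial_nonneg {x : A} (hx : x ∈ Icc (0 : A) 1) (n k : ℕ) :
    0 ≤ aeval x (bernsteinPolynomial ℤ n k) := by
  simpa [bernsteinPolynomial, mul_assoc, ← nsmul_eq_mul] using
    nsmul_nonneg (pow_mul_one_sub_pow_nonneg hx k (n - k)) (n.choose k)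

lemma mul_self_le_sum_mul_self_nsmul {s : Finset ℕ} {q : ℕ → A} (hq : ∀ k ∈ s, 0 ≤ q k)
    (hone : ∑ k ∈ s, q k = 1) {y : A} (hy : ∑ k ∈ s, k • q k = y) :
    y * y ≤ ∑ k ∈ s, (k * k) • q k := by
  have hysa : IsSelfAdjoint y :=
    .of_nonneg (hy ▸ sum_nonneg fun k hk => nsmul_nonneg (hq k hk) k)
  rw [← sub_nonneg, ← sum_sub_mul_mul_sub hone hy]
  exact sum_nonneg fun k hk => ((IsSelfAdjoint.natCast k).sub hysa).conjugate_nonneg (hq k hk)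

end StarOrderedRing

/-- A star-ordered ring whose unit is an order unit for its self-adjoint elements and whose order
is Archimedean: the order-theoretic setting shared by unital C*-algebras, their unital *-subalgebras
that are star-ordered by the induced order, and real matrix algebras. The Archimedean property is
stated for all `z` and `w`, but its premise at `n = 0` and `n = 1` already makes both self-adjoint.
-/
class ArchimedeanStarOrderedRing (A : Type*) [Ring A] [Star A] [PartialOrder A] : Prop where
  exists_le_nsmul_one : ∀ x : A, IsSelfAdjoint x → ∃ n : ℕ, x ≤ n • 1
  nonneg_of_forall_nsmul_add_nonneg : ∀ z w : A, (∀ n : ℕ, 0 ≤ n • z + w) → 0 ≤ z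

instance ArchimedeanStarOrderedRing.ofCStarAlgebra {A : Type*} [CStarAlgebra A] [PartialOrder A]
    [StarOrderedRing A] : ArchimedeanStarOrderedRing A where
  exists_le_nsmul_one x hx := by
    obtain ⟨n, hn⟩ := exists_nat_ge ‖x‖
    refine ⟨n, hx.le_algebraMap_norm_self.trans ?_⟩
    rw [nsmul_one, ← map_natCast (algebraMap ℝ A) n]
    exact algebraMap_mono A hn
  nonneg_of_forall_nsmul_add_nonneg _ _ :=
    nonneg_of_forall_nsmul_add_nonneg_of_closedIciTopology

namespace ArchimedeanStarOrderedRing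

variable {A B : Type*} [Ring A] [StarRing A] [PartialOrder A] [StarOrderedRing A]

section OrderUnit

variable [ArchimedeanStarOrderedRing A]

lemma exists_ne_zero_le_nsmul_one {x : A} (hx : IsSelfAdjoint x) :
    ∃ n : ℕ, n ≠ 0 ∧ x ≤ n • 1 := by
  obtain ⟨n, hn⟩ := exists_le_nsmul_one x hx
  exact ⟨n + 1, n.succ_ne_zero, hn.trans (nsmul_le_nsmul_left zero_le_one n.le_succ)⟩

instance : IsDirectedOrder (selfAdjoint A) where
  directed x y := by
    obtain ⟨m, hm⟩ := exists_le_nsmul_one (x : A) x.2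
    obtain ⟨n, hn⟩ := exists_le_nsmul_one (y : A) y.2
    refine ⟨(m + n) • 1, ?_, ?_⟩
    · exact hm.trans (nsmul_le_nsmul_left zero_le_one (m.le_add_right n))
    · exact hn.trans (nsmul_le_nsmul_left zero_le_one (n.le_add_left m))

variable [Algebra ℝ A] [StarModule ℝ A]

lemma exists_eq_nsmul_mem_Icc {p : A} (hp : 0 ≤ p) :
    ∃ n : ℕ, n ≠ 0 ∧ ∃ e ∈ Icc (0 : A) 1, p = n • e := by
  obtain ⟨n, hn, hpn⟩ := exists_ne_zero_le_nsmul_one (.of_nonneg hp)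
  exact ⟨n, hn, _, inv_natCast_smul_mem_Icc hn hp hpn, (nsmul_inv_natCast_smul hn p).symm⟩

lemma exists_eq_nsmul_sub_nsmul_one {x : A} (hx : IsSelfAdjoint x) :
    ∃ m n : ℕ, ∃ e ∈ Icc (0 : A) 1, x = m • e - n • 1 := by
  obtain ⟨n, hn⟩ := exists_le_nsmul_one (-x) hx.neg
  obtain ⟨m, -, e, he, h⟩ := exists_eq_nsmul_mem_Icc (neg_le_iff_add_nonneg'.1 hn)
  exact ⟨m, n, e, he, eq_sub_of_add_eq h⟩

lemma exists_orderAddMonoidHom_eqOn_Icc [AddCommGroup B] [PartialOrder B] [IsOrderedAddMonoid B]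
    {τ : A → B} (hnonneg : ∀ a ∈ Icc (0 : A) 1, 0 ≤ τ a) (hadd : AdditiveOnIcc 1 τ) :
    ∃ T : A →+o B, EqOn T τ (Icc 0 1) := by
  obtain ⟨S, hSτ, hS⟩ := hadd.exists_additive_on_nonneg fun p hp =>
    exists_ne_zero_le_nsmul_one (.of_nonneg hp)
  obtain ⟨R, hR⟩ := exists_addMonoidHom_eq_on_nonneg (E := selfAdjoint A) (S := fun x => S x)
    fun a b => hS a b
  let T : A →+ B := R.comp (selfAdjointPart ℝ : A →ₗ[ℝ] selfAdjoint A).toAddMonoidHom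
  have hT : EqOn T τ (Icc 0 1) := fun a ha => by
    have hpart := (IsSelfAdjoint.of_nonneg ha.1).coe_selfAdjointPart_apply ℝ
    have hpart_nonneg : 0 ≤ selfAdjointPart ℝ a := Subtype.coe_le_coe.1 (ha.1.trans_eq hpart.symm)
    exact (hR _ hpart_nonneg).trans ((congrArg S hpart).trans (hSτ ha))
  refine ⟨⟨T, (monotone_iff_map_nonneg T).2 fun p hp => ?_⟩, hT⟩
  obtain ⟨n, -, e, he, rfl⟩ := exists_eq_nsmul_mem_Icc hp
  rw [map_nsmul, hT he]
  exact nsmul_nonneg (hnonneg e he) n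

end OrderUnit

section Kadison

variable [Ring B] [StarRing B] [PartialOrder B] [StarOrderedRing B]
  [Algebra ℝ B] [StarModule ℝ B] [ArchimedeanStarOrderedRing B] {T : A →+o B}

lemma map_mul_map_le_map_mul_self_of_mem_Icc (hT : T 1 = 1) {x : A} (hx : x ∈ Icc (0 : A) 1) :
    T x * T x ≤ T (x * x) := by
  rw [← sub_nonneg]
  refine nonneg_of_forall_nsmul_add_nonneg _ (T (x * (1 - x))) fun n => ?_
  rcases eq_or_ne n 0 with rfl | hn
  · simpa using map_nonneg T (mul_one_sub_self_nonneg hx)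
  let p : ℕ → A := fun k => aeval x (bernsteinPolynomial ℤ n k)
  have hsum : ∑ k ∈ range (n + 1), p k = 1 := by
    simpa using congrArg (aeval x) (bernsteinPolynomial.sum ℤ n)
  have hmean : ∑ k ∈ range (n + 1), k • p k = n • x := by
    simpa only [map_sum, map_nsmul, aeval_X] using
      congrArg (aeval x) (bernsteinPolynomial.sum_smul ℤ n)
  have hsecond : ∑ k ∈ range (n + 1), (k * k) • p k = (n * n) • (x * x) + n • (x * (1 - x)) := by
    simpa only [map_sum, map_add, map_nsmul, map_mul, map_sub, map_one, aeval_X] using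
      congrArg (aeval x) (sum_mul_self_nsmul_bernsteinPolynomial ℤ n)
  have hvar : (n • T x) * (n • T x) ≤ (n * n) • T (x * x) + n • T (x * (1 - x)) := by
    simp only [← map_nsmul, ← map_add, ← hmean, ← hsecond, map_sum]
    simpa only [map_nsmul] using mul_self_le_sum_mul_self_nsmul (q := fun k => T (p k))
      (fun k _ => map_nonneg T (aeval_bernsteinPolynomial_nonneg hx n k))
      (by rw [← map_sum, hsum, hT]) rfl
  refine nonneg_of_nsmul_nonneg hn ?_
  calc 0 ≤ (n * n) • T (x * x) + n • T (x * (1 - x)) - (n • T x) * (n • T x) := sub_nonneg.2 hvar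
    _ = n • (n • (T (x * x) - T x * T x) + T (x * (1 - x))) := by
      rw [smul_mul_smul_comm]
      module

variable [Algebra ℝ A] [StarModule ℝ A] [ArchimedeanStarOrderedRing A]

theorem map_mul_map_le_map_mul_self (hT : T 1 = 1) {x : A} (hx : IsSelfAdjoint x) :
    T x * T x ≤ T (x * x) := by
  obtain ⟨m, n, e, he, rfl⟩ := exists_eq_nsmul_sub_nsmul_one hx
  have hdefect : T ((m • e - n • 1) * (m • e - n • 1)) - T (m • e - n • 1) * T (m • e - n • 1)
      = (m * m) • (T (e * e) - T e * T e) := by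
    simp only [sub_mul, mul_sub, map_sub, map_nsmul, smul_mul_smul_comm, hT, mul_one, one_mul]
    module
  rw [← sub_nonneg, hdefect]
  exact nsmul_nonneg (sub_nonneg.2 (map_mul_map_le_map_mul_self_of_mem_Icc hT he)) (m * m)

theorem map_mul_add_mul_of_map_mul_self (hT : T 1 = 1) {a b : A} (ha : IsSelfAdjoint a)
    (hb : IsSelfAdjoint b) (hTa : T (a * a) = T a * T a) :
    T (a * b + b * a) = T a * T b + T b * T a := by
  have hle : ∀ c : A, IsSelfAdjoint c → T a * T c + T c * T a ≤ T (a * c + c * a) := by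
    intro c hc
    rw [← sub_nonneg]
    refine nonneg_of_forall_nsmul_add_nonneg _ (T (c * c) - T c * T c) fun n => ?_
    have hsa : IsSelfAdjoint (n • a + c) := ((IsSelfAdjoint.all n).smul ha).add hc
    refine (sub_nonneg.2 (map_mul_map_le_map_mul_self hT hsa)).trans_eq ?_
    simp only [add_mul, mul_add, map_add, map_nsmul, smul_mul_assoc, mul_smul_comm, hTa]
    module
  refine le_antisymm ?_ (hle b hb)
  simpa only [mul_neg, neg_mul, map_neg, ← neg_add, neg_le_neg_iff] using hle (-b) hb.neg

theorem map_mul_mul_self_of_map_mul_self (hT : T 1 = 1) {a b : A} (ha : IsSelfAdjoint a)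
    (hb : IsSelfAdjoint b) (hTa : T (a * a) = T a * T a)
    (hTaa : T (a * a * (a * a)) = T (a * a) * T (a * a)) :
    T (a * b * a) = T a * T b * T a := by
  have haa : IsSelfAdjoint (a * a) := .of_nonneg ha.mul_self_nonneg
  have hjordan : IsSelfAdjoint (a * b + b * a) := by
    rw [IsSelfAdjoint, star_add, star_mul, star_mul, ha.star_eq, hb.star_eq, add_comm]
  have htwo : 2 • T (a * b * a) = 2 • (T a * T b * T a) := by
    rw [← map_nsmul, two_nsmul_mul_mul_self, map_sub,
      map_mul_add_mul_of_map_mul_self hT ha hjordan hTa,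
      map_mul_add_mul_of_map_mul_self hT ha hb hTa,
      map_mul_add_mul_of_map_mul_self hT haa hb hTaa, hTa, ← two_nsmul_mul_mul_self]
  simpa only [← Nat.cast_smul_eq_nsmul ℝ, smul_right_inj, Nat.cast_ofNat, ne_eq,
    OfNat.ofNat_ne_zero, not_false_eq_true] using htwo

end Kadison

section Faithful

variable [Algebra ℝ A] [StarModule ℝ A] [ArchimedeanStarOrderedRing A] {T : A →+o A}

lemma map_mul_self_of_map_eq_self (hT : T 1 = 1) (hidem : ∀ p, 0 ≤ p → T (T p) = T p)
    (hfaithful : ∀ p, 0 ≤ p → T p = 0 → p = 0) {a : A} (ha : IsSelfAdjoint a) (hTa : T a = a) :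
    T (a * a) = a * a := by
  have hle : a * a ≤ T (a * a) := by simpa only [hTa] using map_mul_map_le_map_mul_self hT ha
  refine sub_eq_zero.1 (hfaithful _ (sub_nonneg.2 hle) ?_)
  rw [map_sub, hidem _ ha.mul_self_nonneg, sub_self]

theorem map_mul_mul_self_of_map_eq_self (hT : T 1 = 1) (hidem : ∀ p, 0 ≤ p → T (T p) = T p)
    (hfaithful : ∀ p, 0 ≤ p → T p = 0 → p = 0) {a b : A} (ha : IsSelfAdjoint a)
    (hb : IsSelfAdjoint b) (hTa : T a = a) : T (a * b * a) = a * T b * a := by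
  have haa : IsSelfAdjoint (a * a) := .of_nonneg ha.mul_self_nonneg
  have hTaa : T (a * a) = a * a := map_mul_self_of_map_eq_self hT hidem hfaithful ha hTa
  have hTaaaa : T (a * a * (a * a)) = a * a * (a * a) :=
    map_mul_self_of_map_eq_self hT hidem hfaithful haa hTaa
  simpa only [hTa] using
    map_mul_mul_self_of_map_mul_self hT ha hb (by rw [hTaa, hTa]) (by rw [hTaaaa, hTaa])

end Faithful

end ArchimedeanStarOrderedRing

open ArchimedeanStarOrderedRing in
theorem faithful_stateOperator_is_conditionalExpectation_general
    (A : Type*) [Ring A] [StarRing A] [PartialOrder A] [StarOrderedRing A]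
    [Algebra ℝ A] [StarModule ℝ A] [ArchimedeanStarOrderedRing A]
    (τ : A → A)
    (hmaps : ∀ a ∈ Icc (0 : A) 1, τ a ∈ Icc (0 : A) 1)
    (hunital : τ 1 = 1)
    (hadd : AdditiveOnIcc 1 τ)
    (hidem : ∀ a ∈ Icc (0 : A) 1, τ (τ a) = τ a)
    (hfaithful : ∀ a ∈ Icc (0 : A) 1, τ a = 0 → a = 0) :
    ∀ a ∈ Icc (0 : A) 1, ∀ b ∈ Icc (0 : A) 1, τ (τ a * b * τ a) = τ a * τ b * τ a := by
  obtain ⟨T, hT⟩ := exists_orderAddMonoidHom_eqOn_Icc (fun a ha => (hmaps a ha).1) hadd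
  have hT_one : T 1 = 1 := by rw [hT ⟨zero_le_one, le_rfl⟩, hunital]
  have hT_idem : ∀ p, 0 ≤ p → T (T p) = T p := by
    intro p hp
    obtain ⟨n, -, e, he, rfl⟩ := exists_eq_nsmul_mem_Icc hp
    rw [map_nsmul, map_nsmul, hT he, hT (hmaps e he), hidem e he]
  have hT_faithful : ∀ p, 0 ≤ p → T p = 0 → p = 0 := by
    intro p hp hTp
    obtain ⟨n, hn, e, he, rfl⟩ := exists_eq_nsmul_mem_Icc hp
    rw [map_nsmul, hT he, ← Nat.cast_smul_eq_nsmul ℝ,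
      smul_eq_zero_iff_right (Nat.cast_ne_zero.2 hn)] at hTp
    rw [hfaithful e he hTp, smul_zero]
  intro a ha b hb
  have hτa := hmaps a ha
  rw [← hT (mul_mul_self_mem_Icc hτa hb), ← hT hb]
  exact map_mul_mul_self_of_map_eq_self hT_one hT_idem hT_faithful (.of_nonneg hτa.1)
    (.of_nonneg hb.1) (by rw [hT hτa, hidem a ha])

/-- A faithful state operator on the effect algebra `E(A)` of a unital C*-algebra
satisfies the conditional expectation property. -/
theorem faithful_stateOperator_is_conditionalExpectation
    (A : Type*) [CStarAlgebra A] [PartialOrder A] [StarOrderedRing A]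
    (τ : A → A)
    (hmaps : ∀ a ∈ Set.Icc (0 : A) 1, τ a ∈ Set.Icc (0 : A) 1)
    (hunital : τ 1 = 1)
    (hadd : ∀ a ∈ Set.Icc (0 : A) 1, ∀ b ∈ Set.Icc (0 : A) 1,
      a + b ∈ Set.Icc (0 : A) 1 → τ (a + b) = τ a + τ b)
    (hidem : ∀ a ∈ Set.Icc (0 : A) 1, τ (τ a) = τ a)
    (hfaithful : ∀ a ∈ Set.Icc (0 : A) 1, τ a = 0 → a = 0) :
    ∀ a ∈ Set.Icc (0 : A) 1, ∀ b ∈ Set.Icc (0 : A) 1,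
      τ (τ a * b * τ a) = τ a * τ b * τ a :=
  faithful_stateOperator_is_conditionalExpectation_general A τ hmaps hunital hadd hidem hfaithful
end
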